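/- arXiv:1612.07623 — 3 statements merged into one kernel-verified Lean document; each statement's English description precedes it below -/
import Mathlib

section
/- Let (X,d) be a proper geodesic metric space, φ : X → ℝ a Kantorovich potential, and x ∈ X. Suppose γ¹, γ² are φ-Kantorovich geodesics and t₁, t₂ ∈ (0,1) satisfy γ¹_{t₁} = γ²_{t₂} = x. Then ℓ(γ¹) = 0 if and only if ℓ(γ²) = 0; moreover, ℓ(γ¹) = 0 if and only if φ(x) + φ^c(x) = 0. In other words, all φ-Kantorovich geodesics having x as an interior point have either all strictly positive length or all zero length, according to whether φ(x) + φ^c(x) ≠ 0 or = 0. -/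
/-- `ψ` is pointwise the `c`-transform of `φ` for the cost `c = d²/2`:
at every point `x`, `ψ x` is a genuine (finite) infimum of `d(x,y)²/2 - φ(y)` over `y`. -/
def IsCTransform {X : Type*} [MetricSpace X] (φ ψ : X → ℝ) : Prop :=
  ∀ x : X, IsGLB {v : ℝ | ∃ y : X, v = dist x y ^ 2 / 2 - φ y} (ψ x)

/-- `φ` is a Kantorovich potential with (real-valued) conjugate potential `φc`. -/
def IsKantorovichPair {X : Type*} [MetricSpace X] (φ φc : X → ℝ) : Prop :=
  IsCTransform φ φc ∧ IsCTransform φc φ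

/-- A constant-speed geodesic parametrized on `[0,1]`. -/
def IsGeodesic {X : Type*} [MetricSpace X] (γ : ℝ → X) : Prop :=
  ∀ s ∈ Set.Icc (0:ℝ) 1, ∀ t ∈ Set.Icc (0:ℝ) 1,
    dist (γ s) (γ t) = |s - t| * dist (γ 0) (γ 1)

/-- A `φ`-Kantorovich geodesic: a geodesic with `φ(γ₀) + φ^c(γ₁) = ℓ(γ)²/2`,
where `ℓ(γ) = d(γ₀,γ₁)`. -/
def IsKantorovichGeodesic {X : Type*} [MetricSpace X] (φ φc : X → ℝ) (γ : ℝ → X) : Prop :=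
  IsGeodesic γ ∧ φ (γ 0) + φc (γ 1) = dist (γ 0) (γ 1) ^ 2 / 2

/-- A metric space is geodesic if every pair of points is joined by a geodesic. -/
def IsGeodesicSpace (X : Type*) [MetricSpace X] : Prop :=
  ∀ x y : X, ∃ γ : ℝ → X, IsGeodesic γ ∧ γ 0 = x ∧ γ 1 = y

/-- The interpolating intermediate-time Kantorovich potential
`φ_t(x) = -inf_y (d(x,y)²/(2t) - φ(y))` for `t ≠ 0`, and `φ_0 = φ`. -/
noncomputable def interpPotential {X : Type*} [MetricSpace X] (φ : X → ℝ) (t : ℝ) (x : X) : ℝ :=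
  if t = 0 then φ x
  else -sInf {v : ℝ | ∃ y : X, v = dist x y ^ 2 / (2 * t) - φ y}

/-- The time-reversed interpolating Kantorovich potential
`φ̄_t(x) = inf_y (d(x,y)²/(2(1-t)) - φ^c(y))` for `t ≠ 1`, and `φ̄_1 = -φ^c`. -/
noncomputable def reversePotential {X : Type*} [MetricSpace X] (φc : X → ℝ) (t : ℝ) (x : X) : ℝ :=
  if t = 1 then -φc x
  else sInf {v : ℝ | ∃ y : X, v = dist x y ^ 2 / (2 * (1 - t)) - φc y}

theorem kantorovich_length_zero_iff {X : Type*} [MetricSpace X] (φ φc : X → ℝ)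
    (hpair : IsKantorovichPair φ φc) (x : X) (γ : ℝ → X) (t : ℝ)
    (ht : t ∈ Set.Ioo (0:ℝ) 1) (h : IsKantorovichGeodesic φ φc γ) (hx : γ t = x) :
    dist (γ 0) (γ 1) = 0 ↔ φ x + φc x = 0 := by
  obtain ⟨hg, hk⟩ := h
  obtain ⟨ht0, ht1⟩ := ht
  have key : ∀ a b : X, φ a + φc b ≤ dist a b ^ 2 / 2 := by
    intro a b
    have := (hpair.2 a).1 ⟨b, rfl⟩
    linarith
  have d0 : dist (γ 0) x = t * dist (γ 0) (γ 1) := by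
    have := hg 0 (by simp) t ⟨ht0.le, ht1.le⟩
    rwa [hx, zero_sub, abs_neg, abs_of_pos ht0] at this
  have d1 : dist x (γ 1) = (1 - t) * dist (γ 0) (γ 1) := by
    have := hg t ⟨ht0.le, ht1.le⟩ 1 (by simp)
    rwa [hx, abs_sub_comm, abs_of_pos (by linarith)] at this
  constructor
  · intro h0
    rw [h0, mul_zero] at d0 d1
    rw [h0, dist_eq_zero.1 d0, ← dist_eq_zero.1 d1] at hk
    simpa using hk
  · intro h0
    have k0 := key (γ 0) x
    have k1 := key x (γ 1)
    rw [d0] at k0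
    rw [d1] at k1
    have hp : 0 < t * (1 - t) := mul_pos ht0 (by linarith)
    have hle : t * (1 - t) * dist (γ 0) (γ 1) ^ 2 ≤ 0 := by nlinarith
    have hs : dist (γ 0) (γ 1) ^ 2 ≤ 0 := by
      by_contra hc
      push Not at hc
      have := mul_pos hp hc
      linarith
    exact pow_eq_zero_iff (two_ne_zero) |>.1 (le_antisymm hs (sq_nonneg _))

/-- On a proper geodesic space, if `γ¹_{t₁} = γ²_{t₂} = x` for `φ`-Kantorovich geodesics
`γ¹, γ²` and `t₁, t₂ ∈ (0,1)`, then `ℓ(γ¹) = 0 ↔ ℓ(γ²) = 0`, and moreover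
`ℓ(γ¹) = 0 ↔ φ(x) + φ^c(x) = 0`. -/
theorem statement5 {X : Type*} [MetricSpace X] [ProperSpace X]
    (hgeo : IsGeodesicSpace X) (φ φc : X → ℝ) (hpair : IsKantorovichPair φ φc)
    (x : X) (γ₁ γ₂ : ℝ → X) (t₁ t₂ : ℝ)
    (ht₁ : t₁ ∈ Set.Ioo (0:ℝ) 1) (ht₂ : t₂ ∈ Set.Ioo (0:ℝ) 1)
    (h₁ : IsKantorovichGeodesic φ φc γ₁) (h₂ : IsKantorovichGeodesic φ φc γ₂)
    (hx₁ : γ₁ t₁ = x) (hx₂ : γ₂ t₂ = x) :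
    (dist (γ₁ 0) (γ₁ 1) = 0 ↔ dist (γ₂ 0) (γ₂ 1) = 0) ∧
      (dist (γ₁ 0) (γ₁ 1) = 0 ↔ φ x + φc x = 0) := by
  have e₁ := kantorovich_length_zero_iff φ φc hpair x γ₁ t₁ ht₁ h₁ hx₁
  have e₂ := kantorovich_length_zero_iff φ φc hpair x γ₂ t₂ ht₂ h₂ hx₂
  exact ⟨e₁.trans e₂.symm, e₁⟩
end

section
/- Let (X,d) be a proper geodesic metric space, φ : X → ℝ a Kantorovich potential, and γ a φ-Kantorovich geodesic with ℓ := ℓ(γ) > 0. Let 0 < s < t < 1 and ε ∈ ℝ be such that s+ε, t+ε ∈ (0,1), and define h(r) := 2·(φ_{r+ε}(γ_r) − φ_r(γ_r) − ε·ℓ²/2) for r ∈ {s,t}. Suppose y ∈ X attains the infimum defining φ_{s+ε}(γ_s), i.e. −φ_{s+ε}(γ_s) = d(γ_s,y)²/(2(s+ε)) − φ(y). Then (h(t) − h(s))/(t − s) ≥ ((s+ε)/(t+ε))·(d(γ_s,y)/(s+ε) − ℓ)². -/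
theorem interp_ge {X : Type*} [MetricSpace X] (φ φc : X → ℝ) (h : IsCTransform φ φc)
    (r : ℝ) (h0 : 0 < r) (h1 : r < 1) (x z : X) :
    φ z - dist x z ^ 2 / (2 * r) ≤ interpPotential φ r x := by
  unfold interpPotential
  rw [if_neg h0.ne']
  have hb : BddBelow {v : ℝ | ∃ y : X, v = dist x y ^ 2 / (2 * r) - φ y} := by
    refine ⟨φc x, ?_⟩
    rintro v ⟨w, rfl⟩
    have h2 := (h x).1 ⟨w, rfl⟩
    have h3 : dist x w ^ 2 / 2 ≤ dist x w ^ 2 / (2 * r) :=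
      div_le_div_of_nonneg_left (by positivity) (by positivity) (by linarith)
    linarith
  have := csInf_le hb ⟨z, rfl⟩
  linarith

theorem interp_le {X : Type*} [MetricSpace X] (φ : X → ℝ)
    (r : ℝ) (h0 : 0 < r) (x : X) (c : ℝ)
    (h : ∀ z, φ z - dist x z ^ 2 / (2 * r) ≤ c) :
    interpPotential φ r x ≤ c := by
  unfold interpPotential
  rw [if_neg h0.ne']
  have : -c ≤ sInf {v : ℝ | ∃ y : X, v = dist x y ^ 2 / (2 * r) - φ y} := by
    refine le_csInf ⟨dist x x ^ 2 / (2 * r) - φ x, x, rfl⟩ ?_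
    rintro v ⟨w, rfl⟩
    linarith [h w]
  linarith

/-- Main third-order inequality: with `ℓ := ℓ(γ) > 0`,
`h(r) := 2(φ_{r+ε}(γ_r) - φ_r(γ_r) - ε·ℓ²/2)`, and `y` attaining the infimum defining
`φ_{s+ε}(γ_s)`, one has `(h(t)-h(s))/(t-s) ≥ ((s+ε)/(t+ε))·(d(γ_s,y)/(s+ε) - ℓ)²`. -/
theorem statement10 {X : Type*} [MetricSpace X] [ProperSpace X]
    (hgeo : IsGeodesicSpace X) (φ φc : X → ℝ) (hpair : IsKantorovichPair φ φc)
    (γ : ℝ → X) (hγ : IsKantorovichGeodesic φ φc γ)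
    (hl : 0 < dist (γ 0) (γ 1))
    (s t ε : ℝ) (hs : 0 < s) (hst : s < t) (ht : t < 1)
    (hsε : s + ε ∈ Set.Ioo (0:ℝ) 1) (htε : t + ε ∈ Set.Ioo (0:ℝ) 1)
    (y : X)
    (hy : -interpPotential φ (s + ε) (γ s)
        = dist (γ s) y ^ 2 / (2 * (s + ε)) - φ y) :
    (2 * (interpPotential φ (t + ε) (γ t) - interpPotential φ t (γ t)
            - ε * dist (γ 0) (γ 1) ^ 2 / 2)
        - 2 * (interpPotential φ (s + ε) (γ s) - interpPotential φ s (γ s)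
            - ε * dist (γ 0) (γ 1) ^ 2 / 2)) / (t - s)
      ≥ (s + ε) / (t + ε) *
          (dist (γ s) y / (s + ε) - dist (γ 0) (γ 1)) ^ 2 := by
  obtain ⟨hg, hk⟩ := hγ
  obtain ⟨ha0, ha1⟩ := hsε
  obtain ⟨hb0, hb1⟩ := htε
  have ht0 : 0 < t := hs.trans hst
  have d0s : dist (γ s) (γ 0) = s * dist (γ 0) (γ 1) := by
    rw [hg s ⟨hs.le, by linarith⟩ 0 ⟨le_rfl, zero_le_one⟩, sub_zero, abs_of_pos hs]
  have dt1 : dist (γ t) (γ 1) = (1 - t) * dist (γ 0) (γ 1) := by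
    rw [hg t ⟨ht0.le, ht.le⟩ 1 ⟨zero_le_one, le_rfl⟩, abs_sub_comm, abs_of_pos (by linarith)]
  have dts : dist (γ t) (γ s) = (t - s) * dist (γ 0) (γ 1) := by
    rw [hg t ⟨ht0.le, ht.le⟩ s ⟨hs.le, by linarith⟩, abs_of_pos (by linarith)]
  have e1 := interp_ge φ φc hpair.1 (t + ε) hb0 hb1 (γ t) y
  have e2 := interp_ge φ φc hpair.1 s hs (hst.trans ht) (γ s) (γ 0)
  have tri := dist_triangle (γ t) (γ s) y
  have e3 : interpPotential φ t (γ t) ≤ φ (γ 0) - t * dist (γ 0) (γ 1) ^ 2 / 2 := by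
    apply interp_le φ t ht0
    intro z
    have h1 := (hpair.1 (γ 1)).1 ⟨z, rfl⟩
    have h2 := dist_triangle (γ 1) (γ t) z
    rw [dist_comm (γ 1) (γ t), dt1] at h2
    have h3 : dist (γ 1) z ^ 2 ≤ ((1 - t) * dist (γ 0) (γ 1) + dist (γ t) z) ^ 2 :=
      pow_le_pow_left₀ dist_nonneg h2 2
    have h4 : dist (γ t) z ^ 2 / (2 * t) + (1 - t) * dist (γ 0) (γ 1) ^ 2 / 2
        - ((1 - t) * dist (γ 0) (γ 1) + dist (γ t) z) ^ 2 / 2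
        = (1 - t) / (2 * t) * (dist (γ t) z - t * dist (γ 0) (γ 1)) ^ 2 := by
      field_simp
      ring
    have h5 : 0 ≤ (1 - t) / (2 * t) * (dist (γ t) z - t * dist (γ 0) (γ 1)) ^ 2 :=
      mul_nonneg (div_nonneg (by linarith) (by linarith)) (sq_nonneg _)
    linarith
  rw [d0s] at e2
  rw [dts] at tri
  generalize dist (γ 0) (γ 1) = l at *
  have e2' : (s * l) ^ 2 / (2 * s) = s * l ^ 2 / 2 := by field_simp
  have e4 : dist (γ t) y ^ 2 / (2 * (t + ε))
      ≤ ((t - s) * l + dist (γ s) y) ^ 2 / (2 * (t + ε)) :=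
    div_le_div_of_nonneg_right (pow_le_pow_left₀ dist_nonneg tri 2) (by linarith)
  have key : (s + ε) / (t + ε) * (dist (γ s) y / (s + ε) - l) ^ 2 * (t - s)
      = 2 * (dist (γ s) y ^ 2 / (2 * (s + ε))
        - ((t - s) * l + dist (γ s) y) ^ 2 / (2 * (t + ε))) + (t - s) * l ^ 2 := by
    have := ha0.ne'
    have := hb0.ne'
    field_simp
    ring
  rw [ge_iff_le, le_div_iff₀ (by linarith), key]
  linarith
end

section
/- (Change-of-Variables Rigidity.) Let K₀ ∈ ℝ and N ∈ (1,∞). Let ρ : (0,1) → ℝ be locally Lipschitz and strictly positive. Let z : (0,1) → ℝ be locally Lipschitz, and suppose that for every δ ∈ (0,1/2) there exists C_δ > 0 such that (z(t) − z(s))/(t − s) ≥ (1 − C_δ·(t−s))·|z(s)|·|z(t)| whenever δ ≤ s < t ≤ 1−δ. For each s ∈ (0,1), let h_s be a CD(K₀,N) density on [0,1] with h_s(s) = 1. Assume that for Lebesgue-a.e. pair (t,s) ∈ (0,1)×(0,1): ρ(s)/ρ(t) = h_s(t)/(1 + (t−s)·z(t)). Then there exist functions L, Y : (0,1) → ℝ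 with 1/ρ(t) = L(t)·Y(t) for all t ∈ (0,1), where L is concave on (0,1) and Y is a CD(K₀,N) density on (0,1). -/
/-- The distortion coefficients `σ^{(t)}_{K,𝒩}(θ)`, valued in `[0,∞]`
(the value is `+∞` when `K > 0` and `θ·√(K/𝒩) ≥ π`). -/
noncomputable def sigmaCoeff (K Np t θ : ℝ) : ENNReal :=
  if θ = 0 then ENNReal.ofReal t
  else if 0 < K then
    if θ * Real.sqrt (K / Np) < Real.pi then
      ENNReal.ofReal (Real.sin (t * (θ * Real.sqrt (K / Np))) / Real.sin (θ * Real.sqrt (K / Np)))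
    else ⊤
  else if K = 0 then ENNReal.ofReal t
  else
    ENNReal.ofReal
      (Real.sinh (t * (θ * Real.sqrt (-K / Np))) / Real.sinh (θ * Real.sqrt (-K / Np)))

/-- `h` is a `CD(K,N)` density on the (interval) `I ⊆ ℝ`: it is nonnegative on `I` and
`h(t·x₁+(1-t)·x₀)^{1/(N-1)} ≥ σ^{(t)}_{K,N-1}(|x₁-x₀|)·h(x₁)^{1/(N-1)}
  + σ^{(1-t)}_{K,N-1}(|x₁-x₀|)·h(x₀)^{1/(N-1)}` for all `x₀,x₁ ∈ I`, `t ∈ [0,1]`. -/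
def IsCDDensity (K N : ℝ) (h : ℝ → ℝ) (I : Set ℝ) : Prop :=
  (∀ x ∈ I, 0 ≤ h x) ∧
  ∀ x₀ ∈ I, ∀ x₁ ∈ I, ∀ t ∈ Set.Icc (0:ℝ) 1,
    sigmaCoeff K (N - 1) t |x₁ - x₀| * ENNReal.ofReal (h x₁ ^ (1 / (N - 1)))
        + sigmaCoeff K (N - 1) (1 - t) |x₁ - x₀| * ENNReal.ofReal (h x₀ ^ (1 / (N - 1)))
      ≤ ENNReal.ofReal (h (t * x₁ + (1 - t) * x₀) ^ (1 / (N - 1)))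

open Filter Topology MeasureTheory Set

lemma cv_cosh (x : ℝ) : 1 + x ^ 2 / 2 ≤ Real.cosh x := by
  have h0 : ∀ y : ℝ, 0 ≤ y → 1 + y ^ 2 / 2 ≤ Real.cosh y := by
    intro y hy
    have h1 := Real.cosh_two_mul (y / 2)
    have h2 := Real.cosh_sq (y / 2)
    have h3 : y / 2 ≤ Real.sinh (y / 2) := Real.self_le_sinh_iff.2 (by linarith)
    rw [show 2 * (y / 2) = y by ring] at h1
    nlinarith
  have := h0 |x| (abs_nonneg x)
  rwa [sq_abs, Real.cosh_abs] at this

set_option maxHeartbeats 1000000 in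
/-- A local second-difference inequality with cubic error implies the global one. -/
lemma cv_local_to_global (S C f : ℝ → ℝ) (A : ℝ) (hA : 0 ≤ A)
    (hScont : Continuous S) (hS0 : S 0 = 0)
    (hadd : ∀ a e, S (a + e) + S (a - e) = 2 * S a * C e)
    (hC : ∀ e, 0 < e → e ≤ 1 → |C e| ≤ 1 + A * e ^ 2)
    (x₀ x₁ : ℝ) (hx : x₀ < x₁)
    (hSpos : ∀ x, 0 < x → x ≤ x₁ - x₀ → 0 < S x)
    (hf : ContinuousOn f (Icc x₀ x₁))
    (hloc : ∀ s ∈ Ioo x₀ x₁, ∃ c r : ℝ, 0 < r ∧ 0 ≤ c ∧ ∀ e, 0 < e → e < r →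
      (f (s + e) + f (s - e)) * (1 - c * e ^ 3) ≤ 2 * C e * f s)
    (x : ℝ) (hxm : x ∈ Icc x₀ x₁) :
    S (x - x₀) * f x₁ + S (x₁ - x) * f x₀ ≤ S (x₁ - x₀) * f x := by
  by_contra hcon
  push Not at hcon
  have hθ : 0 < S (x₁ - x₀) := hSpos _ (by linarith) le_rfl
  have hS0' : ∀ y, 0 ≤ y → y ≤ x₁ - x₀ → 0 ≤ S y := by
    intro y hy hy'
    rcases hy.eq_or_lt with h | h
    · rw [← h, hS0]
    · exact (hSpos y h hy').le
  set T := S (x₁ - x₀) with hT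
  set u : ℝ → ℝ := fun y => (S (y - x₀) * f x₁ + S (x₁ - y) * f x₀) / T with hu
  set w : ℝ → ℝ := fun y => S (y - x₀) + S (x₁ - y) with hw
  have hwpos : ∀ y ∈ Icc x₀ x₁, 0 < w y := by
    intro y hy
    rcases hy.1.eq_or_lt with h | h
    · have : w y = T := by simp [hw, ← h, hS0, hT]
      rw [this]; exact hθ
    · have h1 := hSpos (y - x₀) (by linarith) (by linarith [hy.2])
      have h2 := hS0' (x₁ - y) (by linarith [hy.2]) (by linarith)
      simp only [hw]; linarith
  set a : ℝ := 2 * (A + 1) with ha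
  have hux : f x - u x < 0 := by
    have : f x < u x := by
      simp only [hu]; rw [lt_div_iff₀ hθ]; linarith
    linarith
  have hwx := hwpos x hxm
  set m₀ : ℝ := -((f x - u x) / w x) with hm₀
  have hm₀pos : 0 < m₀ := by
    rw [hm₀, neg_pos]; exact div_neg_of_neg_of_pos hux hwx
  -- choose ε
  obtain ⟨ε, hε, hε0, hε1⟩ : ∃ ε > 0, ε * Real.exp (a * x₀) < m₀ * T ∧ ε * Real.exp (a * x₁) < m₀ * T := by
    refine ⟨m₀ * T / (2 * (Real.exp (a * x₀) + Real.exp (a * x₁))), by positivity, ?_, ?_⟩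
    · rw [div_mul_eq_mul_div, div_lt_iff₀ (by positivity)]
      have := Real.exp_pos (a * x₀); have := Real.exp_pos (a * x₁)
      apply mul_lt_mul_of_pos_left _ (by positivity); linarith
    · rw [div_mul_eq_mul_div, div_lt_iff₀ (by positivity)]
      have := Real.exp_pos (a * x₀); have := Real.exp_pos (a * x₁)
      apply mul_lt_mul_of_pos_left _ (by positivity); linarith
  set G : ℝ → ℝ := fun y => (f y - u y - ε * Real.exp (a * y)) / w y with hG
  have hGc : ContinuousOn G (Icc x₀ x₁) := by
    apply ContinuousOn.div
    · apply ContinuousOn.sub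
      · exact hf.sub (by fun_prop)
      · fun_prop
    · fun_prop
    · intro y hy; exact (hwpos y hy).ne'
  obtain ⟨s, hs, hmin⟩ := isCompact_Icc.exists_isMinOn ⟨x, hxm⟩ hGc
  have hGs : G s < -m₀ := by
    refine lt_of_le_of_lt (hmin hxm) ?_
    rw [hm₀, neg_neg]
    simp only [hG]
    apply div_lt_div_of_pos_right _ hwx
    have := Real.exp_pos (a * x)
    nlinarith
  have hs0 : s ≠ x₀ := by
    rintro rfl
    have h1 : G s = -(ε * Real.exp (a * s)) / T := by
      simp only [hG, hu, hw, sub_self, hS0, zero_add, zero_mul, ← hT]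
      rw [mul_div_assoc, mul_comm T, div_mul_cancel₀ _ hθ.ne']; ring_nf
    rw [h1, div_lt_iff₀ hθ] at hGs
    linarith
  have hs1 : s ≠ x₁ := by
    rintro rfl
    have h1 : G s = -(ε * Real.exp (a * s)) / T := by
      simp only [hG, hu, hw, sub_self, hS0, zero_mul, ← hT, add_zero]
      rw [mul_comm T, mul_div_assoc, div_self hθ.ne']; ring_nf
    rw [h1, div_lt_iff₀ hθ] at hGs
    linarith
  have hsI : s ∈ Ioo x₀ x₁ := ⟨lt_of_le_of_ne hs.1 (Ne.symm hs0), lt_of_le_of_ne hs.2 hs1⟩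
  set v : ℝ → ℝ := fun y => u y + G s * w y with hv
  have hvadd : ∀ e, v (s + e) + v (s - e) = 2 * C e * v s := by
    intro e
    have h1 := hadd (s - x₀) e
    have h2 := hadd (x₁ - s) e
    simp only [hv, hu, hw]
    rw [show s + e - x₀ = s - x₀ + e by ring, show s - e - x₀ = s - x₀ - e by ring,
      show x₁ - (s + e) = x₁ - s - e by ring, show x₁ - (s - e) = x₁ - s + e by ring]
    field_simp
    linear_combination (f x₁ + T * G s) * h1 + (f x₀ + T * G s) * h2
  have hfge : ∀ y ∈ Icc x₀ x₁, v y + ε * Real.exp (a * y) ≤ f y := by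
    intro y hy
    have h1 : G s ≤ G y := hmin hy
    have h2 : G s * w y ≤ f y - u y - ε * Real.exp (a * y) := by
      rw [← le_div_iff₀ (hwpos y hy)]; exact h1
    simp only [hv]; linarith
  have hfs : f s = v s + ε * Real.exp (a * s) := by
    have h2 : G s * w s = f s - u s - ε * Real.exp (a * s) := by
      simp only [hG]; rw [div_mul_cancel₀ _ (hwpos s hs).ne']
    simp only [hv]; linarith
  obtain ⟨c, r, hr, hc, hl⟩ := hloc s hsI
  set E := Real.exp (a * s) with hE
  have hEpos : 0 < E := Real.exp_pos _
  -- final contradiction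
  set B : ℝ := (1 + A) * |v s| + ε * Real.cosh a * E with hB
  have hBpos : 0 < B := by
    have := Real.cosh_pos a
    positivity
  obtain ⟨e, he, her, he1, he0, heL, heR, hec⟩ : ∃ e : ℝ, 0 < e ∧ e < r ∧ e ≤ 1 ∧ c * e ^ 3 ≤ 1 ∧
      x₀ ≤ s - e ∧ s + e ≤ x₁ ∧ c * e * B < ε * E := by
    have hev : ∀ᶠ e : ℝ in 𝓝[>] 0, 0 < e ∧ e < r ∧ e < 1 ∧ c * e ^ 3 < 1 ∧
      x₀ < s - e ∧ s + e < x₁ ∧ c * e * B < ε * E := by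
      have key : ∀ (g k : ℝ → ℝ), Continuous g → Continuous k → g 0 < k 0 → ∀ᶠ e : ℝ in 𝓝[>] 0, g e < k e := by
        intro g k hg hk h0
        exact nhdsWithin_le_nhds (hg.continuousAt.eventually_lt hk.continuousAt h0)
      filter_upwards [self_mem_nhdsWithin, key (fun e => e) (fun _ => r) (by fun_prop) (by fun_prop) hr,
        key (fun e => e) (fun _ => 1) (by fun_prop) (by fun_prop) (by norm_num),
        key (fun e => c * e ^ 3) (fun _ => 1) (by fun_prop) (by fun_prop) (by norm_num),
        key (fun e => x₀) (fun e => s - e) (by fun_prop) (by fun_prop) (by simpa using hsI.1),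
        key (fun e => s + e) (fun e => x₁) (by fun_prop) (by fun_prop) (by simpa using hsI.2),
        key (fun e => c * e * B) (fun e => ε * E) (by fun_prop) (by fun_prop) (by simp; positivity)]
        with e h1 h2 h3 h4 h5 h6 h7
      exact ⟨h1, h2, h3, h4, h5, h6, h7⟩
    obtain ⟨e, h1, h2, h3, h4, h5, h6, h7⟩ := hev.exists
    exact ⟨e, h1, h2, h3.le, h4.le, h5.le, h6.le, h7⟩
  have h1 := hfge (s + e) ⟨by linarith, heR⟩
  have h2 := hfge (s - e) ⟨heL, by linarith⟩
  have hcosh : Real.exp (a * (s + e)) + Real.exp (a * (s - e)) = 2 * Real.cosh (a * e) * E := by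
    rw [Real.cosh_eq, hE, mul_add, mul_sub, Real.exp_add, sub_eq_add_neg, Real.exp_add]; ring
  have h3 : 2 * C e * v s + ε * (2 * Real.cosh (a * e) * E) ≤ f (s + e) + f (s - e) := by
    rw [← hvadd, ← hcosh]; linarith
  have h4 := hl e he her
  have h5 := le_trans (mul_le_mul_of_nonneg_right h3 (by linarith : 0 ≤ 1 - c * e ^ 3)) h4
  rw [hfs] at h5
  have hCe := hC e he he1
  have hch1 : 1 + a ^ 2 * e ^ 2 / 2 ≤ Real.cosh (a * e) := by
    have := cv_cosh (a * e)
    rw [mul_pow] at this; exact this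
  have hch2 : Real.cosh (a * e) ≤ Real.cosh a := by
    rw [Real.cosh_le_cosh, abs_of_nonneg (by positivity), abs_of_nonneg (by positivity)]
    nlinarith
  have h6 : 2 * (ε * E) * (Real.cosh (a * e) - C e) ≤ c * e ^ 3 * (2 * (C e * v s + ε * Real.cosh (a * e) * E)) := by
    linarith
  have h7 : C e * v s + ε * Real.cosh (a * e) * E ≤ B := by
    have h8 : C e * v s ≤ (1 + A) * |v s| := by
      refine (le_abs_self _).trans ?_
      rw [abs_mul]
      apply mul_le_mul_of_nonneg_right _ (abs_nonneg _)
      nlinarith [mul_le_mul_of_nonneg_left (show e ^ 2 ≤ 1 by nlinarith) hA]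
    have h9 : ε * Real.cosh (a * e) * E ≤ ε * Real.cosh a * E := by gcongr
    linarith
  have h8 : e ^ 2 ≤ Real.cosh (a * e) - C e := by
    have h9 := (le_abs_self _).trans hCe
    have h10 : (A + 1) * e ^ 2 ≤ a ^ 2 * e ^ 2 / 2 := by
      rw [ha]; nlinarith [mul_nonneg hA (sq_nonneg e), mul_nonneg (mul_nonneg hA hA) (sq_nonneg e), sq_nonneg e]
    linarith
  have h9 : 2 * (ε * E) * e ^ 2 ≤ c * e ^ 3 * (2 * B) := by
    calc _ ≤ 2 * (ε * E) * (Real.cosh (a * e) - C e) := by gcongr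
      _ ≤ _ := h6
      _ ≤ _ := by gcongr
  have h10 : 0 < e ^ 2 := by positivity
  nlinarith

lemma cv_Z_bound (z Z : ℝ → ℝ) (l u M : ℝ) (hM : 0 ≤ M)
    (hZ : ∀ t ∈ Icc l u, HasDerivAt Z (z t) t)
    (h1 : ∀ r ∈ Icc l u, ∀ t ∈ Icc l u, r ≤ t → z t - z r ≥ (t - r) * z t ^ 2 - M * (t - r) ^ 2)
    (h2 : ∀ r ∈ Icc l u, ∀ t ∈ Icc l u, r ≤ t → z t - z r ≥ (t - r) * z r ^ 2 - M * (t - r) ^ 2)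
    (s t : ℝ) (hs : s ∈ Icc l u) (ht : t ∈ Icc l u) :
    Z t - Z s ≤ (t - s) * z t - ((t - s) * z t) ^ 2 / 2 + M * |t - s| ^ 3 := by
  rcases le_total s t with hst | hst
  · have hsub : Icc s t ⊆ Icc l u := Icc_subset_Icc hs.1 ht.2
    set F : ℝ → ℝ := fun r => Z t - Z r - (t - r) * z t + ((t - r) * z t) ^ 2 / 2 - M * (t - r) ^ 3 with hF
    have hd : ∀ r ∈ Icc s t, HasDerivAt F (-z r + z t - (t - r) * z t ^ 2 + 3 * M * (t - r) ^ 2) r := by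
      intro r hr
      have hb : HasDerivAt (fun r => t - r) (-1) r := by simpa using (hasDerivAt_id r).const_sub t
      have := ((((hZ r (hsub hr)).const_sub (Z t)).sub (hb.mul_const (z t))).add
        (((hb.mul_const (z t)).pow 2).div_const 2)).sub ((hb.pow 3).const_mul M)
      refine this.congr_deriv ?_
      norm_num; ring
    have hmono : MonotoneOn F (Icc s t) := by
      apply monotoneOn_of_deriv_nonneg (convex_Icc s t)
      · exact fun r hr => (hd r hr).continuousAt.continuousWithinAt
      · intro r hr; exact (hd r (interior_subset hr)).differentiableAt.differentiableWithinAt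
      · intro r hr
        have hr' := interior_subset hr
        rw [(hd r hr').deriv]
        have := h1 r (hsub hr') t ht hr'.2
        nlinarith [mul_nonneg hM (sq_nonneg (t - r))]
    have := hmono ⟨le_rfl, hst⟩ ⟨hst, le_rfl⟩ hst
    simp only [hF] at this
    rw [abs_of_nonneg (by linarith)]
    norm_num at this
    linarith
  · have hsub : Icc t s ⊆ Icc l u := Icc_subset_Icc ht.1 hs.2
    set F : ℝ → ℝ := fun r => Z t - Z r + (r - t) * z t + ((r - t) * z t) ^ 2 / 2 - M * (r - t) ^ 3 with hF
    have hd : ∀ r ∈ Icc t s, HasDerivAt F (-z r + z t + (r - t) * z t ^ 2 - 3 * M * (r - t) ^ 2) r := by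
      intro r hr
      have hb : HasDerivAt (fun r => r - t) 1 r := by simpa using (hasDerivAt_id r).sub_const t
      have := ((((hZ r (hsub hr)).const_sub (Z t)).add (hb.mul_const (z t))).add
        (((hb.mul_const (z t)).pow 2).div_const 2)).sub ((hb.pow 3).const_mul M)
      refine this.congr_deriv ?_
      norm_num; ring
    have hmono : AntitoneOn F (Icc t s) := by
      apply antitoneOn_of_deriv_nonpos (convex_Icc t s)
      · exact fun r hr => (hd r hr).continuousAt.continuousWithinAt
      · intro r hr; exact (hd r (interior_subset hr)).differentiableAt.differentiableWithinAt
      · intro r hr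
        have hr' := interior_subset hr
        rw [(hd r hr').deriv]
        have := h2 t ht r (hsub hr') hr'.1
        nlinarith [mul_nonneg hM (sq_nonneg (r - t))]
    have := hmono ⟨le_rfl, hst⟩ ⟨hst, le_rfl⟩ hst
    simp only [hF] at this
    rw [abs_of_nonpos (by linarith)]
    norm_num at this
    nlinarith

lemma cv_Q (z : ℝ → ℝ) (Z : ℝ → ℝ)
    (hzlip : ∀ a b : ℝ, 0 < a → a ≤ b → b < 1 →
      ∃ C : NNReal, LipschitzOnWith C z (Set.Icc a b))
    (hz : ∀ δ : ℝ, 0 < δ → δ < 1 / 2 → ∃ C : ℝ, 0 < C ∧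
      ∀ s t : ℝ, δ ≤ s → s < t → t ≤ 1 - δ →
        (z t - z s) / (t - s) ≥ (1 - C * (t - s)) * (|z s| * |z t|))
    (hZ : ∀ t ∈ Ioo (0:ℝ) 1, HasDerivAt Z (z t) t) (s₀ : ℝ) (hs₀ : s₀ ∈ Ioo (0:ℝ) 1) :
    ∃ c r : ℝ, 0 ≤ c ∧ 0 < r ∧ 0 < s₀ - r ∧ s₀ + r < 1 ∧
      ∀ x y, |x - s₀| ≤ r → |y - s₀| ≤ r → |x - y| ≤ r →
      Real.exp (-Z y) * Real.exp (- c * |x - y| ^ 3) ≤ Real.exp (-Z x) * (1 + (x - y) * z x) := by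
  obtain ⟨hs0, hs1⟩ := hs₀
  set δ := min s₀ (1 - s₀) / 2 with hδ
  have hmin : 0 < min s₀ (1 - s₀) := lt_min hs0 (by linarith)
  have hm1 := min_le_left s₀ (1 - s₀)
  have hm2 := min_le_right s₀ (1 - s₀)
  have hδ0 : 0 < δ := by positivity
  have hδ1 : δ < 1 / 2 := by linarith
  obtain ⟨C, hC, hzC⟩ := hz δ hδ0 hδ1
  obtain ⟨A, hA⟩ := hzlip δ (1 - δ) hδ0 (by linarith) (by linarith)
  obtain ⟨B, hB⟩ := isCompact_Icc.exists_bound_of_continuousOn hA.continuousOn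
  have hB0 : 0 ≤ B := (norm_nonneg _).trans (hB s₀ ⟨by linarith, by linarith⟩)
  set M : ℝ := A * B + C * B ^ 2 with hM
  have hM0 : 0 ≤ M := by positivity
  have base : ∀ r ∈ Icc δ (1 - δ), ∀ t ∈ Icc δ (1 - δ), r ≤ t → ∀ q ∈ Icc δ (1 - δ), (q = r ∨ q = t) →
      z t - z r ≥ (t - r) * z q ^ 2 - M * (t - r) ^ 2 := by
    intro r hr t ht hrt q hq hqq
    rcases hrt.eq_or_lt with h | h
    · subst h; simp
    have h1 := hzC r t hr.1 h ht.2
    have hpos : 0 < t - r := by linarith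
    rw [ge_iff_le, le_div_iff₀ hpos] at h1
    have hlip : |z t - z r| ≤ A * (t - r) := by
      have := hA.dist_le_mul t ht r hr
      rwa [Real.dist_eq, Real.dist_eq, abs_of_pos hpos] at this
    have hbt := hB t ht; have hbr := hB r hr
    rw [Real.norm_eq_abs] at hbt hbr
    have hP : |z r| * |z t| ≤ B ^ 2 := by
      rw [sq]; exact mul_le_mul hbr hbt (abs_nonneg _) hB0
    have hQ : z q ^ 2 - A * B * (t - r) ≤ |z r| * |z t| := by
      have e1 := abs_sub_abs_le_abs_sub (z t) (z r)
      have e2 := abs_sub_abs_le_abs_sub (z r) (z t)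
      rw [abs_sub_comm] at e2
      have hAB : 0 ≤ A * (t - r) := by positivity
      rcases hqq with rfl | rfl
      · rw [← sq_abs]
        nlinarith [abs_nonneg (z q), mul_le_mul_of_nonneg_left (e2.trans hlip) (abs_nonneg (z q)),
          mul_le_mul_of_nonneg_left hbr hAB]
      · rw [← sq_abs]
        nlinarith [abs_nonneg (z q), mul_le_mul_of_nonneg_left (e1.trans hlip) (abs_nonneg (z q)),
          mul_le_mul_of_nonneg_left hbt hAB]
    have e3 := mul_le_mul_of_nonneg_left hQ hpos.le
    have e4 := mul_le_mul_of_nonneg_left hP (mul_nonneg hC.le (sq_nonneg (t - r)))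
    rw [hM]
    nlinarith
  have hZb := cv_Z_bound z Z δ (1 - δ) M hM0
    (fun t ht => hZ t ⟨by linarith [ht.1], by linarith [ht.2]⟩)
    (fun r hr t ht hrt => base r hr t ht hrt t ht (Or.inr rfl))
    (fun r hr t ht hrt => base r hr t ht hrt r hr (Or.inl rfl))
  set r := min δ (1 / (2 * (B + 1))) with hr
  have hr0 : 0 < r := lt_min hδ0 (by positivity)
  have hrδ : r ≤ δ := min_le_left _ _
  refine ⟨M + 2 * B ^ 3, r, by positivity, hr0, by linarith, by linarith, ?_⟩
  intro x y hx hy hxy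
  have hxI : x ∈ Icc δ (1 - δ) := by
    rw [abs_le] at hx; constructor <;> linarith
  have hyI : y ∈ Icc δ (1 - δ) := by
    rw [abs_le] at hy; constructor <;> linarith
  have hzb := hZb y x hyI hxI
  set w := (x - y) * z x with hw
  have hbx := hB x hxI
  rw [Real.norm_eq_abs] at hbx
  have hwb : |w| ≤ |x - y| * B := by rw [hw, abs_mul]; gcongr
  have hw2 : |w| ≤ 1 / 2 := by
    refine hwb.trans ?_
    calc |x - y| * B ≤ (1 / (2 * (B + 1))) * (B + 1) := by
          apply mul_le_mul (hxy.trans (min_le_right _ _)) (by linarith) hB0 (by positivity)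
      _ = 1 / 2 := by field_simp
  have hlog : w - w ^ 2 / 2 - 2 * B ^ 3 * |x - y| ^ 3 ≤ Real.log (1 + w) := by
    have h1 := Real.abs_log_sub_add_sum_range_le (x := -w) (by rw [abs_neg]; linarith) 2
    simp only [Finset.sum_range_succ, Finset.sum_range_zero, abs_neg] at h1
    norm_num at h1
    have h2 : |w| ^ 3 / (1 - |w|) ≤ 2 * (|x - y| * B) ^ 3 := by
      rw [div_le_iff₀ (by linarith)]
      have h3 : |w| ^ 3 ≤ (|x - y| * B) ^ 3 := by gcongr
      have h4 : 0 ≤ (|x - y| * B) ^ 3 := by positivity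
      nlinarith
    have h5 := (abs_le.1 (h1.trans h2)).1
    rw [mul_pow] at h5
    linarith
  have hwp : 0 < 1 + w := by linarith [(abs_le.1 hw2).1]
  rw [← Real.exp_log hwp, ← Real.exp_add, ← Real.exp_add]
  apply Real.exp_le_exp.2
  linarith

lemma cv_sigma (K Np : ℝ) (hNp : 0 < Np) : ∃ (S C : ℝ → ℝ) (A : ℝ), 0 ≤ A ∧ Continuous S ∧ S 0 = 0 ∧
    (∀ a e, S (a + e) + S (a - e) = 2 * S a * C e) ∧
    (∀ e, 0 < e → e ≤ 1 → |C e| ≤ 1 + A * e ^ 2) ∧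
    ∀ θ, 0 < θ → (∀ t, sigmaCoeff K Np t θ = ⊤) ∨
      ((∀ x, 0 < x → x ≤ θ → 0 < S x) ∧
        ∀ t, sigmaCoeff K Np t θ = ENNReal.ofReal (S (t * θ) / S θ)) := by
  rcases lt_trichotomy K 0 with hK | hK | hK
  · set k := Real.sqrt (-K / Np) with hk
    have hk0 : 0 < k := Real.sqrt_pos.2 (div_pos (by linarith) hNp)
    refine ⟨fun x => Real.sinh (x * k), fun x => Real.cosh (x * k), k ^ 2 / 2 * Real.exp (k ^ 2 / 2),
      by positivity, by fun_prop, by simp, ?_, ?_, ?_⟩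
    · intro a e
      simp only [add_mul, sub_mul, Real.sinh_add, Real.sinh_sub]; ring
    · intro e he he1
      rw [abs_of_pos (Real.cosh_pos _)]
      refine (Real.cosh_le_exp_half_sq _).trans ?_
      set x := (e * k) ^ 2 / 2 with hx
      have hx1 : x ≤ k ^ 2 / 2 := by
        have : e ^ 2 ≤ 1 := by nlinarith
        rw [hx, mul_pow]; nlinarith [sq_nonneg k]
      have h1 : Real.exp x ≤ 1 + x * Real.exp x := by
        have h2 := Real.add_one_le_exp (-x)
        have h3 : Real.exp (-x) * Real.exp x = 1 := by rw [← Real.exp_add]; simp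
        nlinarith [Real.exp_pos x]
      have h2 : x * Real.exp x ≤ x * Real.exp (k ^ 2 / 2) := by
        have : 0 ≤ x := by positivity
        gcongr
      calc _ ≤ _ := h1
        _ ≤ 1 + x * Real.exp (k ^ 2 / 2) := by linarith
        _ = _ := by rw [hx]; ring
    · intro θ hθ
      right
      refine ⟨fun x hx _ => Real.sinh_pos_iff.2 (by positivity), fun t => ?_⟩
      rw [sigmaCoeff, if_neg hθ.ne', if_neg (by linarith), if_neg hK.ne]
      simp only [hk, mul_assoc]
  · refine ⟨fun x => x, fun _ => 1, 0, le_rfl, by fun_prop, rfl, ?_, ?_, ?_⟩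
    · intro a e; ring
    · intro e _ _; simp
    · intro θ hθ
      right
      refine ⟨fun x hx _ => hx, fun t => ?_⟩
      rw [sigmaCoeff, if_neg hθ.ne', if_neg (by linarith), if_pos hK, mul_div_cancel_right₀ _ hθ.ne']
  · set k := Real.sqrt (K / Np) with hk
    have hk0 : 0 < k := Real.sqrt_pos.2 (div_pos (by linarith) hNp)
    refine ⟨fun x => Real.sin (x * k), fun x => Real.cos (x * k), 0,
      le_rfl, by fun_prop, by simp, ?_, ?_, ?_⟩
    · intro a e
      simp only [add_mul, sub_mul, Real.sin_add, Real.sin_sub]; ring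
    · intro e he he1
      simpa using Real.abs_cos_le_one _
    · intro θ hθ
      by_cases hp : θ * k < Real.pi
      · right
        refine ⟨fun x hx hx' => Real.sin_pos_of_pos_of_lt_pi (by positivity)
          (lt_of_le_of_lt (by gcongr) hp), fun t => ?_⟩
        rw [sigmaCoeff, if_neg hθ.ne', if_pos hK, if_pos hp]
        simp only [hk, mul_assoc]
      · left
        intro t
        rw [sigmaCoeff, if_neg hθ.ne', if_pos hK, if_neg hp]

lemma cv_antideriv (z : ℝ → ℝ)
    (hz : ContinuousOn z (Ioo (0:ℝ) 1)) : ∃ Z : ℝ → ℝ, ∀ t ∈ Ioo (0:ℝ) 1, HasDerivAt Z (z t) t := by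
  refine ⟨fun t => ∫ x in (1/2:ℝ)..t, z x, fun t ht => ?_⟩
  apply intervalIntegral.integral_hasDerivAt_right
  · apply ContinuousOn.intervalIntegrable
    apply hz.mono
    apply (ordConnected_Ioo).uIcc_subset _ ht
    constructor <;> norm_num
  · exact hz.stronglyMeasurableAtFilter isOpen_Ioo t ht
  · exact hz.continuousAt (isOpen_Ioo.mem_nhds ht)

lemma cv_frequently (P : ℝ → ℝ → Prop)
    (hae : ∀ᵐ p ∂((volume : Measure (ℝ × ℝ)).restrict (Ioo (0:ℝ) 1 ×ˢ Ioo (0:ℝ) 1)), P p.1 p.2)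
    (a b c s : ℝ) (ha : a ∈ Ioo (0:ℝ) 1) (hb : b ∈ Ioo (0:ℝ) 1) (hc : c ∈ Ioo (0:ℝ) 1)
    (hs : s ∈ Ioo (0:ℝ) 1) :
    ∃ᶠ q : ℝ × ℝ in 𝓝 (0, s), q.2 ∈ Ioo (0:ℝ) 1 ∧
      (a + q.1 ∈ Ioo (0:ℝ) 1 ∧ P (a + q.1) q.2) ∧
      (b + q.1 ∈ Ioo (0:ℝ) 1 ∧ P (b + q.1) q.2) ∧
      (c + q.1 ∈ Ioo (0:ℝ) 1 ∧ P (c + q.1) q.2) := by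
  rw [ae_restrict_iff' (measurableSet_Ioo.prod measurableSet_Ioo)] at hae
  have shift : ∀ x : ℝ, ∀ᵐ q : ℝ × ℝ, (x + q.1, q.2) ∈ Ioo (0:ℝ) 1 ×ˢ Ioo (0:ℝ) 1 → P (x + q.1) q.2 := by
    intro x
    have := (measurePreserving_add_left (volume : Measure (ℝ × ℝ)) (x, 0)).quasiMeasurePreserving.ae hae
    filter_upwards [this] with q hq
    simpa using hq
  have near : ∀ x ∈ Ioo (0:ℝ) 1, ∀ᶠ q : ℝ × ℝ in 𝓝 (0, s), x + q.1 ∈ Ioo (0:ℝ) 1 := by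
    intro x hx
    have hcont : ContinuousAt (fun q : ℝ × ℝ => x + q.1) (0, s) := by fun_prop
    exact hcont (isOpen_Ioo.mem_nhds (by simpa using hx))
  have nears : ∀ᶠ q : ℝ × ℝ in 𝓝 (0, s), q.2 ∈ Ioo (0:ℝ) 1 := by
    have hcont : ContinuousAt (fun q : ℝ × ℝ => q.2) (0, s) := by fun_prop
    exact hcont (isOpen_Ioo.mem_nhds (by simpa using hs))
  have hall := ((shift a).and ((shift b).and (shift c)))
  have hd : ∃ᶠ q : ℝ × ℝ in 𝓝 (0, s), ((a + q.1, q.2) ∈ Ioo (0:ℝ) 1 ×ˢ Ioo (0:ℝ) 1 → P (a + q.1) q.2) ∧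
     ((b + q.1, q.2) ∈ Ioo (0:ℝ) 1 ×ˢ Ioo (0:ℝ) 1 → P (b + q.1) q.2) ∧
     ((c + q.1, q.2) ∈ Ioo (0:ℝ) 1 ×ˢ Ioo (0:ℝ) 1 → P (c + q.1) q.2) := by
    have := MeasureTheory.Measure.dense_of_ae hall
    exact mem_closure_iff_frequently.1 (this (0, s))
  refine (hd.and_eventually (((near a ha).and (near b hb)).and ((near c hc).and nears))).mono ?_
  rintro q ⟨⟨h1, h2, h3⟩, ⟨h4, h5⟩, h6, h7⟩
  exact ⟨h7, ⟨h4, h1 ⟨h4, h7⟩⟩, ⟨h5, h2 ⟨h5, h7⟩⟩, ⟨h6, h3 ⟨h6, h7⟩⟩⟩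
/-- Change-of-Variables Rigidity. Under the rigid a.e. change-of-variables relation
`ρ(s)/ρ(t) = h_s(t)/(1 + (t-s)·z(t))`, with `ρ` locally Lipschitz and positive, `z`
locally Lipschitz satisfying the third-order inequality, and each `h_s` a `CD(K₀,N)`
density on `[0,1]` with `h_s(s) = 1`, there is a factorization `1/ρ = L·Y` on `(0,1)`
with `L` concave and `Y` a `CD(K₀,N)` density on `(0,1)`. -/
theorem statement13 (K₀ N : ℝ) (hN : 1 < N)
    (ρ : ℝ → ℝ) (hρpos : ∀ t ∈ Set.Ioo (0:ℝ) 1, 0 < ρ t)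
    (hρlip : ∀ a b : ℝ, 0 < a → a ≤ b → b < 1 →
      ∃ C : NNReal, LipschitzOnWith C ρ (Set.Icc a b))
    (z : ℝ → ℝ)
    (hzlip : ∀ a b : ℝ, 0 < a → a ≤ b → b < 1 →
      ∃ C : NNReal, LipschitzOnWith C z (Set.Icc a b))
    (hz : ∀ δ : ℝ, 0 < δ → δ < 1 / 2 → ∃ C : ℝ, 0 < C ∧
      ∀ s t : ℝ, δ ≤ s → s < t → t ≤ 1 - δ →
        (z t - z s) / (t - s) ≥ (1 - C * (t - s)) * (|z s| * |z t|))
    (h : ℝ → ℝ → ℝ)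
    (hh : ∀ s ∈ Set.Ioo (0:ℝ) 1,
      IsCDDensity K₀ N (h s) (Set.Icc 0 1) ∧ h s s = 1)
    (hae : ∀ᵐ p ∂((MeasureTheory.volume : MeasureTheory.Measure (ℝ × ℝ)).restrict
        (Set.Ioo (0:ℝ) 1 ×ˢ Set.Ioo (0:ℝ) 1)),
      ρ p.2 / ρ p.1 = h p.2 p.1 / (1 + (p.1 - p.2) * z p.1)) :
    ∃ L Y : ℝ → ℝ,
      (∀ t ∈ Set.Ioo (0:ℝ) 1, 1 / ρ t = L t * Y t) ∧
      ConcaveOn ℝ (Set.Ioo (0:ℝ) 1) L ∧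
      IsCDDensity K₀ N Y (Set.Ioo 0 1) := by
  have hNp : 0 < N - 1 := by linarith
  have hp : 0 < 1 / (N - 1) := by positivity
  have contOf : ∀ f : ℝ → ℝ, (∀ a b : ℝ, 0 < a → a ≤ b → b < 1 →
      ∃ C : NNReal, LipschitzOnWith C f (Set.Icc a b)) → ∀ t ∈ Ioo (0:ℝ) 1, ContinuousAt f t := by
    intro f hf t ht
    obtain ⟨C, hC⟩ := hf (t / 2) ((1 + t) / 2) (by linarith [ht.1]) (by linarith [ht.1, ht.2])
      (by linarith [ht.2])
    exact hC.continuousOn.continuousAt (Icc_mem_nhds (by linarith [ht.1]) (by linarith [ht.2]))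
  have hρc := contOf ρ hρlip
  have hzc := contOf z hzlip
  obtain ⟨Z, hZ⟩ := cv_antideriv z (fun t ht => (hzc t ht).continuousWithinAt)
  have hZc : ∀ t ∈ Ioo (0:ℝ) 1, ContinuousAt Z t := fun t ht => (hZ t ht).continuousAt
  have hQ := cv_Q z Z hzlip hz hZ
  obtain ⟨S, C, A, hA, hSc, hS0, hadd, hC, hσ⟩ := cv_sigma K₀ (N - 1) hNp
  -- pointwise consequences of the relation
  have hrel : ∀ x ∈ Ioo (0:ℝ) 1, ∀ s ∈ Ioo (0:ℝ) 1,
      ρ s / ρ x = h s x / (1 + (x - s) * z x) →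
      0 < h s x ∧ h s x = ρ s / ρ x * (1 + (x - s) * z x) := by
    intro x hx s hs hr
    have hpos : 0 < ρ s / ρ x := div_pos (hρpos s hs) (hρpos x hx)
    have hnn : 0 ≤ h s x := (hh s hs).1.1 x ⟨hx.1.le, hx.2.le⟩
    have hd : 1 + (x - s) * z x ≠ 0 := by
      intro h0; rw [h0, div_zero] at hr; linarith
    have hne : h s x ≠ 0 := by
      intro h0; rw [h0, zero_div] at hr; linarith
    refine ⟨lt_of_le_of_ne hnn (Ne.symm hne), ?_⟩
    rw [hr, div_mul_cancel₀ _ hd]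
  -- the infinite case of the coefficients does not occur
  have hσ' : ∀ x₀ ∈ Ioo (0:ℝ) 1, ∀ x₁ ∈ Ioo (0:ℝ) 1, x₀ < x₁ →
      ((∀ x, 0 < x → x ≤ x₁ - x₀ → 0 < S x) ∧
        ∀ t, sigmaCoeff K₀ (N - 1) t (x₁ - x₀) =
          ENNReal.ofReal (S (t * (x₁ - x₀)) / S (x₁ - x₀))) := by
    intro x₀ hx₀ x₁ hx₁ hlt
    rcases hσ (x₁ - x₀) (by linarith) with htop | hgood
    · exfalso
      obtain ⟨q, hq, ⟨ha, har⟩, ⟨hb, hbr⟩, -⟩ :=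
        (cv_frequently (fun x s => ρ s / ρ x = h s x / (1 + (x - s) * z x)) hae x₀ x₁ x₁ x₀ hx₀ hx₁ hx₁ hx₀).exists
      have hcd := (hh q.2 hq).1.2 (x₀ + q.1) ⟨ha.1.le, ha.2.le⟩ (x₁ + q.1) ⟨hb.1.le, hb.2.le⟩ (1/2)
        ⟨by norm_num, by norm_num⟩
      rw [show x₁ + q.1 - (x₀ + q.1) = x₁ - x₀ by ring, abs_of_pos (by linarith), htop,
        ENNReal.top_mul, top_add] at hcd
      · exact ENNReal.ofReal_ne_top (top_le_iff.1 hcd)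
      · have := Real.rpow_pos_of_pos (hrel _ hb _ hq hbr).1 (1 / (N - 1))
        simpa using this
    · exact hgood
  set p := 1 / (N - 1) with hpdef
  set H : ℝ → ℝ → ℝ := fun x s => ρ s / ρ x * (1 + (x - s) * z x) with hH
  -- the midpoint inequality for the continuous representative
  have hmid : ∀ s ∈ Ioo (0:ℝ) 1, ∀ e, 0 < e → s - e ∈ Ioo (0:ℝ) 1 → s + e ∈ Ioo (0:ℝ) 1 →
      H (s + e) s ^ p + H (s - e) s ^ p ≤ 2 * C e := by
    intro s hs e he hm hpl
    obtain ⟨hSp, hSσ⟩ := hσ' (s - e) hm (s + e) hpl (by linarith)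
    have h2e : s + e - (s - e) = 2 * e := by ring
    rw [h2e] at hSp hSσ
    have hSe := hSp e he (by linarith)
    have hS2e := hSp (2 * e) (by linarith) le_rfl
    have hdup : S (2 * e) = 2 * S e * C e := by
      have := hadd e e
      rwa [sub_self, hS0, add_zero, ← two_mul] at this
    have hfreq := cv_frequently (fun x s => ρ s / ρ x = h s x / (1 + (x - s) * z x)) hae (s - e) (s + e) s s hm hpl hs hs
    have hcH : ∀ x ∈ Ioo (0:ℝ) 1, Tendsto (fun q : ℝ × ℝ => H (x + q.1) q.2 ^ p) (𝓝 (0, s))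
        (𝓝 (H x s ^ p)) := by
      intro x hx
      have h1 : Tendsto (fun q : ℝ × ℝ => x + q.1) (𝓝 (0, s)) (𝓝 x) := by
        have : ContinuousAt (fun q : ℝ × ℝ => x + q.1) (0, s) := by fun_prop
        simpa [ContinuousAt] using this
      have h2 : Tendsto (fun q : ℝ × ℝ => q.2) (𝓝 (0, s)) (𝓝 s) := by
        have : ContinuousAt (fun q : ℝ × ℝ => q.2) (0, s) := by fun_prop
        simpa [ContinuousAt] using this
      have h3 : Tendsto (fun q : ℝ × ℝ => ρ (x + q.1)) (𝓝 (0, s)) (𝓝 (ρ x)) :=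
        (hρc x hx).tendsto.comp h1
      have h4 : Tendsto (fun q : ℝ × ℝ => ρ q.2) (𝓝 (0, s)) (𝓝 (ρ s)) :=
        (hρc s hs).tendsto.comp h2
      have h5 : Tendsto (fun q : ℝ × ℝ => z (x + q.1)) (𝓝 (0, s)) (𝓝 (z x)) :=
        (hzc x hx).tendsto.comp h1
      exact ((h4.div h3 (hρpos x hx).ne').mul (((h1.sub h2).mul h5).const_add 1)).rpow_const
        (Or.inr hp.le)
    have hlim := le_of_tendsto_of_tendsto_of_frequently
      (((hcH _ hpl).add (hcH _ hm)).const_mul (S e)) ((hcH s hs).const_mul (S (2 * e))) (hfreq.mono ?_)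
    · have hHs : H s s = 1 := by simp [hH, (hρpos s hs).ne']
      rw [hHs, Real.one_rpow, mul_one, hdup] at hlim
      nlinarith
    · rintro q ⟨hq, ⟨ha, har⟩, ⟨hb, hbr⟩, ⟨hc, hcr⟩⟩
      have hcd := (hh q.2 hq).1.2 (s - e + q.1) ⟨ha.1.le, ha.2.le⟩ (s + e + q.1) ⟨hb.1.le, hb.2.le⟩
        (1/2) ⟨by norm_num, by norm_num⟩
      have ra := hrel _ ha _ hq har
      have rb := hrel _ hb _ hq hbr
      have rc := hrel _ hc _ hq hcr
      have pa := Real.rpow_pos_of_pos ra.1 p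
      have pb := Real.rpow_pos_of_pos rb.1 p
      have pc := Real.rpow_pos_of_pos rc.1 p
      rw [show s + e + q.1 - (s - e + q.1) = 2 * e by ring, abs_of_pos (by linarith),
        show (1:ℝ) - 1/2 = 1/2 by norm_num, hSσ,
        show 1 / 2 * (s + e + q.1) + 1 / 2 * (s - e + q.1) = s + q.1 by ring,
        show 1 / 2 * (2 * e) = e by ring,
        ← ENNReal.ofReal_mul (by positivity), ← ENNReal.ofReal_mul (by positivity),
        ← ENNReal.ofReal_add (by positivity) (by positivity),
        ENNReal.ofReal_le_ofReal_iff pc.le, ← mul_add, div_mul_eq_mul_div, div_le_iff₀ hS2e] at hcd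
      rw [ra.2, rb.2, rc.2] at hcd
      simp only [hH]
      linarith
  set L : ℝ → ℝ := fun t => Real.exp (-Z t) with hL
  set Y : ℝ → ℝ := fun t => Real.exp (Z t) / ρ t with hY
  have hYpos : ∀ t ∈ Ioo (0:ℝ) 1, 0 < Y t := fun t ht => div_pos (Real.exp_pos _) (hρpos t ht)
  have hYc : ∀ t ∈ Ioo (0:ℝ) 1, ContinuousAt (fun t => Y t ^ p) t := fun t ht =>
    ((hZc t ht).rexp.div (hρc t ht) (hρpos t ht).ne').rpow_const (Or.inr hp.le)
  have hYloc : ∀ s ∈ Ioo (0:ℝ) 1, ∃ c r : ℝ, 0 < r ∧ 0 ≤ c ∧ ∀ e, 0 < e → e < r →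
      (Y (s + e) ^ p + Y (s - e) ^ p) * (1 - c * e ^ 3) ≤ 2 * C e * Y s ^ p := by
    intro s hs
    obtain ⟨c, r, hc, hr, hr0, hr1, hq⟩ := hQ s hs
    refine ⟨c * p, r, hr, by positivity, fun e he her => ?_⟩
    have hm : s - e ∈ Ioo (0:ℝ) 1 := ⟨by linarith, by linarith [hs.2]⟩
    have hpl : s + e ∈ Ioo (0:ℝ) 1 := ⟨by linarith [hs.1], by linarith⟩
    have key : ∀ x ∈ Ioo (0:ℝ) 1, |x - s| = e →
        Y x ^ p * (1 - c * p * e ^ 3) ≤ H x s ^ p * Y s ^ p := by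
      intro x hx hxe
      have h1 := hq x s (by rw [hxe]; exact her.le) (by simpa using hr.le) (by rw [hxe]; exact her.le)
      rw [hxe] at h1
      have hYx := hYpos x hx
      have hYs := hYpos s hs
      have hρx := hρpos x hx
      have hρs := hρpos s hs
      have h2 : Y x * Real.exp (-c * e ^ 3) ≤ H x s * Y s := by
        have e1 : Y x * Real.exp (-c * e ^ 3) =
            (Real.exp (Z x) * Real.exp (Z s) / ρ x) * (Real.exp (-Z s) * Real.exp (-c * e ^ 3)) := by
          simp only [hY]; rw [Real.exp_neg (Z s)]
          field_simp
        have e2 : H x s * Y s =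
            (Real.exp (Z x) * Real.exp (Z s) / ρ x) * (Real.exp (-Z x) * (1 + (x - s) * z x)) := by
          simp only [hY, hH]; rw [Real.exp_neg (Z x)]
          field_simp
        rw [e1, e2]
        exact mul_le_mul_of_nonneg_left h1 (by positivity)
      have hpos : 0 < Y x * Real.exp (-c * e ^ 3) := mul_pos hYx (Real.exp_pos _)
      have hHpos : 0 ≤ H x s := by
        have := lt_of_lt_of_le hpos h2
        exact (pos_of_mul_pos_left this hYs.le).le
      have h3 := Real.rpow_le_rpow hpos.le h2 hp.le
      rw [Real.mul_rpow hYx.le (Real.exp_pos _).le, Real.mul_rpow hHpos hYs.le, ← Real.exp_mul] at h3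
      refine le_trans ?_ h3
      apply mul_le_mul_of_nonneg_left _ (Real.rpow_nonneg hYx.le p)
      have := Real.add_one_le_exp (-c * e ^ 3 * p)
      linarith
    have k1 := key (s + e) hpl (by rw [add_sub_cancel_left, abs_of_pos he])
    have k2 := key (s - e) hm (by rw [sub_sub_cancel_left, abs_neg, abs_of_pos he])
    have k3 := mul_le_mul_of_nonneg_right (hmid s hs e he hm hpl) (Real.rpow_nonneg (hYpos s hs).le p)
    linarith
  have hLloc : ∀ s ∈ Ioo (0:ℝ) 1, ∃ c r : ℝ, 0 < r ∧ 0 ≤ c ∧ ∀ e, 0 < e → e < r →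
      (L (s + e) + L (s - e)) * (1 - c * e ^ 3) ≤ 2 * 1 * L s := by
    intro s hs
    obtain ⟨c, r, hc, hr, hr0, hr1, hq⟩ := hQ s hs
    refine ⟨c, r, hr, hc, fun e he her => ?_⟩
    have h1 := hq s (s + e) (by simpa using hr.le) (by rw [add_sub_cancel_left, abs_of_pos he]; exact her.le)
      (by rw [sub_add_cancel_left, abs_neg, abs_of_pos he]; exact her.le)
    have h2 := hq s (s - e) (by simpa using hr.le)
      (by rw [sub_sub_cancel_left, abs_neg, abs_of_pos he]; exact her.le)
      (by rw [sub_sub_cancel, abs_of_pos he]; exact her.le)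
    rw [sub_add_cancel_left, abs_neg, abs_of_pos he] at h1
    rw [sub_sub_cancel, abs_of_pos he] at h2
    have h3 := Real.add_one_le_exp (-c * e ^ 3)
    have h4 : 0 ≤ L (s + e) + L (s - e) := by simp only [hL]; positivity
    have h5 := mul_le_mul_of_nonneg_left h3 h4
    simp only [hL] at h5 ⊢
    linarith
  refine ⟨L, Y, ?_, ?_, ?_⟩
  · intro t ht
    simp only [hL, hY]
    rw [Real.exp_neg]
    have := (hρpos t ht).ne'
    field_simp
  · refine LinearOrder.concaveOn_of_lt (convex_Ioo 0 1) ?_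
    intro x hx y hy hxy a b ha hb hab
    have ea : a = 1 - b := by linarith
    subst ea
    have hsub : Icc x y ⊆ Ioo (0:ℝ) 1 := fun w hw => ⟨by linarith [hx.1, hw.1], by linarith [hy.2, hw.2]⟩
    have := cv_local_to_global (fun x => x) (fun _ => 1) L 0 le_rfl continuous_id rfl
      (fun a e => by ring) (fun e _ _ => by simp) x y hxy (fun x hx _ => hx)
      (fun t ht => (hZc t (hsub ht)).neg.rexp.continuousWithinAt)
      (fun s hs => hLloc s (hsub ⟨hs.1.le, hs.2.le⟩)) ((1 - b) * x + b * y)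
      ⟨by nlinarith, by nlinarith⟩
    have hyx : 0 < y - x := by linarith
    simp only [smul_eq_mul]
    have h1 : (y - x) * ((1 - b) * L x + b * L y) ≤ (y - x) * L ((1 - b) * x + b * y) := by
      linarith
    exact le_of_mul_le_mul_left h1 hyx
  · refine ⟨fun t ht => (hYpos t ht).le, ?_⟩
    have main : ∀ x₀ ∈ Ioo (0:ℝ) 1, ∀ x₁ ∈ Ioo (0:ℝ) 1, x₀ < x₁ → ∀ t ∈ Icc (0:ℝ) 1,
        sigmaCoeff K₀ (N - 1) t (x₁ - x₀) * ENNReal.ofReal (Y x₁ ^ p)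
          + sigmaCoeff K₀ (N - 1) (1 - t) (x₁ - x₀) * ENNReal.ofReal (Y x₀ ^ p)
        ≤ ENNReal.ofReal (Y (t * x₁ + (1 - t) * x₀) ^ p) := by
      intro x₀ hx₀ x₁ hx₁ hlt t ht
      obtain ⟨hSp, hSσ⟩ := hσ' x₀ hx₀ x₁ hx₁ hlt
      have hsub : Icc x₀ x₁ ⊆ Ioo (0:ℝ) 1 :=
        fun w hw => ⟨by linarith [hx₀.1, hw.1], by linarith [hx₁.2, hw.2]⟩
      have hxm : t * x₁ + (1 - t) * x₀ ∈ Icc x₀ x₁ := ⟨by nlinarith [ht.1], by nlinarith [ht.2]⟩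
      have hg := cv_local_to_global S C (fun t => Y t ^ p) A hA hSc hS0 hadd hC x₀ x₁ hlt hSp
        (fun t ht => (hYc t (hsub ht)).continuousWithinAt)
        (fun s hs => hYloc s (hsub ⟨hs.1.le, hs.2.le⟩)) _ hxm
      have hθ : 0 < S (x₁ - x₀) := hSp _ (by linarith) le_rfl
      have hSnn : ∀ t ∈ Icc (0:ℝ) 1, 0 ≤ S (t * (x₁ - x₀)) := by
        intro t ht
        rcases ht.1.eq_or_lt with h0 | h0
        · rw [← h0, zero_mul, hS0]
        · exact (hSp _ (mul_pos h0 (by linarith)) (by nlinarith [ht.2])).le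
      have n1 := hSnn t ht
      have n2 := hSnn (1 - t) ⟨by linarith [ht.2], by linarith [ht.1]⟩
      have p0 := Real.rpow_nonneg (hYpos _ hx₀).le p
      have p1 := Real.rpow_nonneg (hYpos _ hx₁).le p
      rw [hSσ, hSσ, ← ENNReal.ofReal_mul (by positivity), ← ENNReal.ofReal_mul (by positivity),
        ← ENNReal.ofReal_add (by positivity) (by positivity)]
      apply ENNReal.ofReal_le_ofReal
      rw [show t * x₁ + (1 - t) * x₀ - x₀ = t * (x₁ - x₀) by ring,
        show x₁ - (t * x₁ + (1 - t) * x₀) = (1 - t) * (x₁ - x₀) by ring] at hg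
      rw [div_mul_eq_mul_div, div_mul_eq_mul_div, ← add_div, div_le_iff₀ hθ]
      linarith
    intro x₀ hx₀ x₁ hx₁ t ht
    rcases lt_trichotomy x₀ x₁ with hlt | heq | hlt
    · rw [abs_of_pos (by linarith)]
      exact main x₀ hx₀ x₁ hx₁ hlt t ht
    · subst heq
      have p0 := Real.rpow_nonneg (hYpos _ hx₀).le p
      have ht1 : 0 ≤ 1 - t := by linarith [ht.2]
      rw [sub_self, abs_zero, sigmaCoeff, sigmaCoeff, if_pos rfl, if_pos rfl, ← add_mul,
        ← ENNReal.ofReal_add ht.1 ht1, show t * x₀ + (1 - t) * x₀ = x₀ by ring]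
      simp
    · rw [abs_of_neg (by linarith), neg_sub, add_comm, add_comm (t * x₁)]
      have := main x₁ hx₁ x₀ hx₀ hlt (1 - t) ⟨by linarith [ht.2], by linarith [ht.1]⟩
      rwa [sub_sub_cancel] at this
end
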